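/- Let d ≥ 3 be a fixed integer. There exists δ₀ > 0 such that for every δ ∈ (0, δ₀) there exists a constant c(δ) > 0 with the following property: for every prime p with gcd(p,d) = 1 and every vector 𝔫 = (𝔫_0,…,𝔫_{p−1}) ∈ ℝ^p with 𝔫_j ≥ 0 and Σ_j 𝔫_j = 1, if max_{0≤j≤p−1} |𝔫_j − 1/p| > δ/p and 𝔫_0 < 1 − δ/p, then I(𝔫) ≤ −c(δ)/p, where I(𝔫) = (d−1)·ln p + (d−1)·Σ_{j=0}^{p−1} 𝔫_j·ln 𝔫_j + inf_{t ∈ ℝ^p} ( ln( p^{−(d−1)} Σ_{a ∈ Z_{d,p}} exp(⟨t, Φ(a)⟩) ) − d·⟨t, 𝔫⟩ ), with the convention 0·ln 0 = 0. -/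

import Mathlib

open Finset

/-- The counting map `Φ` : the `j`-th coordinate of `Φ(a)` is `#{r : a r = j}`. -/
def Phi {d p : ℕ} (a : Fin d → ZMod p) (j : ZMod p) : ℕ :=
  (Finset.univ.filter (fun r : Fin d => a r = j)).card

/-!
Write `𝔫 = f²` with `f` a nonnegative unit vector. The tilt `t = ((d - 1) / d) log 𝔫` cancels the
entropy term, and up to normalization the exponential sum becomes
`∑ ∏ᵣ 𝔫(aᵣ) ^ ((d - 1) / d)` over zero-sum tuples. Each summand is the geometric mean of the `d`
products that omit one factor `𝔫(aᵣ)`, and each of those products sums to `1`. Merging two of them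
into their own geometric mean before applying AM-GM bounds the sum by
`1 - (2 / d) (1 - W)`, where `W = (f ∗ f ∗ f² ∗ ⋯ ∗ f²)(0)`.

It remains to keep `W` away from `1`. If `(f² ∗ f ∗ f)(c)` is close to `1`, then `f` is nearly
symmetric under most reflections `x ↦ c - y - x` weighted by `f(y)²`, hence nearly invariant under
the difference set of the set of such `y`. By Cauchy–Davenport that difference set is everything,
so that `f` is nearly constant, or it is so small that `f²` is concentrated at one point. A nearly
constant `f` loses half of its variance. A peak at `x₀` costs a constant unless the tuple
`(x₀, …, x₀)` has sum zero; since `p ∤ d` this forces `x₀ = 0`, where the loss is at least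
`(1 - 𝔫(0)) / 8`.
-/

section UnitVectors

variable {ι : Type*} [Fintype ι] {f : ι → ℝ}

lemma sum_sq_comp_equiv (f : ι → ℝ) (e : ι ≃ ι) : ∑ x, f (e x) ^ 2 = ∑ x, f x ^ 2 :=
  Equiv.sum_comp e (f · ^ 2)

lemma two_mul_sum_mul_add_sub_three_le {u v : ι → ℝ} (hf : ∑ x, f x ^ 2 = 1)
    (hu : ∑ x, u x ^ 2 = 1) (hv : ∑ x, v x ^ 2 = 1) :
    2 * (∑ x, f x * u x + ∑ x, f x * v x) - 3 ≤ ∑ x, u x * v x := by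
  have hnonneg : 0 ≤ ∑ x, (2 * f x - u x - v x) ^ 2 := sum_nonneg fun _ _ => sq_nonneg _
  have hexpand : ∀ x, (2 * f x - u x - v x) ^ 2 =
      4 * f x ^ 2 + u x ^ 2 + v x ^ 2 - 4 * (f x * u x) - 4 * (f x * v x) + 2 * (u x * v x) :=
    fun x => by ring
  simp only [hexpand, sum_add_distrib, sum_sub_distrib, ← mul_sum, hf, hu, hv] at hnonneg
  linarith

lemma sq_add_sq_le_one (hf : ∑ x, f x ^ 2 = 1) {x y : ι} (hxy : x ≠ y) :
    f x ^ 2 + f y ^ 2 ≤ 1 :=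
  hf ▸ add_le_sum (f := fun z => f z ^ 2) (fun _ _ => sq_nonneg _) (mem_univ x) (mem_univ y) hxy

lemma sum_prod_sq_eq_one (hf : ∑ x, f x ^ 2 = 1) (k : ℕ) :
    ∑ a : Fin k → ι, ∏ i, f (a i) ^ 2 = 1 := by
  rw [← Fintype.sum_pow fun x => f x ^ 2, hf, one_pow]

lemma sum_sub_const_sq (f : ι → ℝ) (c : ℝ) :
    ∑ x, (f x - c) ^ 2 = ∑ x, f x ^ 2 - 2 * c * ∑ x, f x + Fintype.card ι * c ^ 2 := by
  have hexpand : ∀ x, (f x - c) ^ 2 = f x ^ 2 - 2 * c * f x + c ^ 2 := fun x => by ring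
  simp [hexpand, sum_add_distrib, sum_sub_distrib, ← mul_sum]

lemma inv_sqrt_card_sq : (√(Fintype.card ι : ℝ))⁻¹ ^ 2 = 1 / Fintype.card ι := by
  rw [inv_pow, Real.sq_sqrt (Nat.cast_nonneg _), one_div]

variable [Nonempty ι]

lemma sum_balance_sq (f : ι → ℝ) :
    ∑ x, Fintype.balance f x ^ 2 = ∑ x, f x ^ 2 - (∑ x, f x) ^ 2 / Fintype.card ι := by
  simp only [Fintype.balance_apply, Fintype.expect_eq_sum_div_card, sum_sub_const_sq]
  field_simp
  ring

lemma four_mul_sum_balance_sq (hf : ∑ x, f x ^ 2 = 1) :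
    4 * ∑ x, Fintype.balance f x ^ 2 =
      (∑ x, (f x - (√(Fintype.card ι : ℝ))⁻¹) ^ 2) *
        ∑ x, (f x + (√(Fintype.card ι : ℝ))⁻¹) ^ 2 := by
  have hplus := sum_sub_const_sq f (-(√(Fintype.card ι : ℝ))⁻¹)
  simp only [sub_neg_eq_add, neg_sq] at hplus
  have hcard : (Fintype.card ι : ℝ) * (1 / Fintype.card ι) = 1 :=
    mul_one_div_cancel (Nat.cast_ne_zero.mpr Fintype.card_ne_zero)
  rw [hplus, sum_sub_const_sq, sum_balance_sq, hf, inv_sqrt_card_sq, hcard]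
  linear_combination 4 * (∑ x, f x) ^ 2 * inv_sqrt_card_sq (ι := ι)

lemma sum_abs_sq_sub_inv_card_sq_le (hf : ∑ x, f x ^ 2 = 1) :
    (∑ x, |f x ^ 2 - 1 / Fintype.card ι|) ^ 2 ≤ 4 * ∑ x, Fintype.balance f x ^ 2 := by
  set u := (√(Fintype.card ι : ℝ))⁻¹ with hu
  calc (∑ x, |f x ^ 2 - 1 / Fintype.card ι|) ^ 2
      = (∑ x, |f x - u| * |f x + u|) ^ 2 := by
        refine congrArg (· ^ 2) (sum_congr rfl fun x _ => ?_)
        rw [← inv_sqrt_card_sq, ← hu, sq_sub_sq, abs_mul, mul_comm]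
    _ ≤ (∑ x, |f x - u| ^ 2) * ∑ x, |f x + u| ^ 2 := sum_mul_sq_le_sq_mul_sq _ _ _
    _ = 4 * ∑ x, Fintype.balance f x ^ 2 := by simp only [sq_abs, four_mul_sum_balance_sq hf, hu]

lemma sub_inv_sqrt_card_sq_le (hf0 : ∀ x, 0 ≤ f x) (hf : ∑ x, f x ^ 2 = 1) (j : ι) :
    (f j - (√(Fintype.card ι : ℝ))⁻¹) ^ 2 ≤ 2 * ∑ x, Fintype.balance f x ^ 2 := by
  have hprod := four_mul_sum_balance_sq hf
  have hcard : (Fintype.card ι : ℝ) * (1 / Fintype.card ι) = 1 :=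
    mul_one_div_cancel (Nat.cast_ne_zero.mpr Fintype.card_ne_zero)
  have hsq := inv_sqrt_card_sq (ι := ι)
  have hu0 : 0 ≤ (√(Fintype.card ι : ℝ))⁻¹ := by positivity
  set u := (√(Fintype.card ι : ℝ))⁻¹
  have hminus : (f j - u) ^ 2 ≤ ∑ x, (f x - u) ^ 2 :=
    single_le_sum (f := fun x => (f x - u) ^ 2) (fun _ _ => sq_nonneg _) (mem_univ j)
  have hplus : 2 ≤ ∑ x, (f x + u) ^ 2 := calc
    (2 : ℝ) = ∑ x, (f x ^ 2 + u ^ 2) := by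
      rw [sum_add_distrib, hf, sum_const, card_univ, nsmul_eq_mul, hsq, hcard, one_add_one_eq_two]
    _ ≤ ∑ x, (f x + u) ^ 2 := sum_le_sum fun x _ => by nlinarith [mul_nonneg (hf0 x) hu0]
  nlinarith

lemma div_three_lt_abs_sub_of_lt_abs_sq_sub_sq {u y δ : ℝ} (hu : 0 < u) (hy : 0 ≤ y) (hδ : δ < 1)
    (h : δ * u ^ 2 < |y ^ 2 - u ^ 2|) : δ * u / 3 < |y - u| := by
  by_contra! hle
  have hyu : y ≤ 2 * u := by nlinarith [le_abs_self (y - u)]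
  have hfactor : |y ^ 2 - u ^ 2| = |y - u| * (y + u) := by
    rw [← abs_of_nonneg (add_nonneg hy hu.le), ← abs_mul]
    ring_nf
  nlinarith [mul_le_mul_of_nonneg_left (by linarith : y + u ≤ 3 * u) (abs_nonneg (y - u))]

lemma le_sum_balance_sq_of_lt_abs_sub (hf0 : ∀ x, 0 ≤ f x) (hf : ∑ x, f x ^ 2 = 1) {δ : ℝ}
    (hδ0 : 0 ≤ δ) (hδ1 : δ < 1) {j : ι}
    (hj : δ / Fintype.card ι < |f j ^ 2 - 1 / Fintype.card ι|) :
    δ ^ 2 / 18 / Fintype.card ι ≤ ∑ x, Fintype.balance f x ^ 2 := by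
  have hbalance := sub_inv_sqrt_card_sq_le hf0 hf j
  have hu0 : 0 < (√(Fintype.card ι : ℝ))⁻¹ := by positivity
  rw [div_eq_mul_one_div, ← inv_sqrt_card_sq] at hj ⊢
  set u := (√(Fintype.card ι : ℝ))⁻¹
  have hdev : (δ * u / 3) ^ 2 ≤ (f j - u) ^ 2 := by
    rw [sq_le_sq, abs_of_nonneg (by positivity)]
    exact (div_three_lt_abs_sub_of_lt_abs_sq_sub_sq hu0 (hf0 j) hδ1 hj).le
  linarith

end UnitVectors

section Correlations

variable {G : Type*} [AddCommGroup G] [Fintype G] {f : G → ℝ}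

/-- The self-convolution `(f ∗ f) b`. For a unit vector `f` it measures how close `f` is to being
symmetric under the reflection `x ↦ b - x`. -/
def selfConv (f : G → ℝ) (b : G) : ℝ := ∑ x, f x * f (b - x)

/-- The autocorrelation of `f` at shift `g`. For a unit vector `f` it measures how close `f` is to
being invariant under translation by `g`. -/
def autocorr (f : G → ℝ) (g : G) : ℝ := ∑ x, f x * f (x + g)

/-- The triple convolution `(f² ∗ f ∗ f) c`. -/
def tripleConv (f : G → ℝ) (c : G) : ℝ := ∑ x, f x ^ 2 * selfConv f (c - x)

lemma two_mul_sum_sq_sub_selfConv (f : G → ℝ) (b : G) :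
    2 * (∑ x, f x ^ 2 - selfConv f b) = ∑ x, (f x - f (b - x)) ^ 2 := by
  have hexpand : ∀ x, (f x - f (b - x)) ^ 2 = f x ^ 2 + f (b - x) ^ 2 - 2 * (f x * f (b - x)) :=
    fun x => by ring
  have hrefl := sum_sq_comp_equiv f (Equiv.subLeft b)
  simp only [Equiv.subLeft_apply] at hrefl
  simp only [hexpand, sum_add_distrib, sum_sub_distrib, ← mul_sum, hrefl, selfConv]
  ring

lemma abs_selfConv_le (f : G → ℝ) (b : G) : |selfConv f b| ≤ ∑ x, f x ^ 2 := by
  have hrefl := sum_sq_comp_equiv f (Equiv.subLeft b)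
  simp only [Equiv.subLeft_apply] at hrefl
  refine abs_le_of_sq_le_sq ?_ (sum_nonneg fun _ _ => sq_nonneg _)
  calc selfConv f b ^ 2 ≤ (∑ x, f x ^ 2) * ∑ x, f (b - x) ^ 2 := sum_mul_sq_le_sq_mul_sq _ _ _
    _ = (∑ x, f x ^ 2) ^ 2 := by rw [hrefl, sq]

lemma selfConv_le_one (hf : ∑ x, f x ^ 2 = 1) (b : G) : selfConv f b ≤ 1 :=
  hf ▸ (le_abs_self _).trans (abs_selfConv_le f b)

lemma tripleConv_le_one (hf : ∑ x, f x ^ 2 = 1) (c : G) : tripleConv f c ≤ 1 := calc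
  tripleConv f c ≤ ∑ x, f x ^ 2 * 1 :=
    sum_le_sum fun _ _ => mul_le_mul_of_nonneg_left (selfConv_le_one hf _) (sq_nonneg _)
  _ = 1 := by simp only [mul_one, hf]

lemma sum_selfConv (f : G → ℝ) : ∑ b, selfConv f b = (∑ x, f x) ^ 2 := by
  simp only [selfConv]
  rw [sum_comm, sq, sum_mul]
  refine sum_congr rfl fun x _ => ?_
  rw [← mul_sum]
  exact congrArg (f x * ·) (Equiv.sum_comp (Equiv.subRight x) f)

lemma sum_autocorr (f : G → ℝ) : ∑ g, autocorr f g = (∑ x, f x) ^ 2 := by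
  simp only [autocorr]
  rw [sum_comm, sq, sum_mul]
  refine sum_congr rfl fun x _ => ?_
  rw [← mul_sum]
  exact congrArg (f x * ·) (Equiv.sum_comp (Equiv.addLeft x) f)

/-- Two reflections compose to a translation. -/
lemma two_mul_selfConv_add_sub_three_le_autocorr (hf : ∑ x, f x ^ 2 = 1) (b c : G) :
    2 * (selfConv f b + selfConv f c) - 3 ≤ autocorr f (c - b) := calc
  2 * (selfConv f b + selfConv f c) - 3 ≤ ∑ x, f (b - x) * f (c - x) :=
    two_mul_sum_mul_add_sub_three_le hf ((sum_sq_comp_equiv f (Equiv.subLeft b)).trans hf)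
      ((sum_sq_comp_equiv f (Equiv.subLeft c)).trans hf)
  _ = autocorr f (c - b) := Fintype.sum_equiv (Equiv.subLeft b) _ _ fun x => by
    rw [Equiv.subLeft_apply, sub_add_sub_cancel']

lemma autocorr_le_autocorr_add {h : G → ℝ} (hf : ∑ x, f x ^ 2 ≤ 1) (hh : ∑ x, h x ^ 2 ≤ 1)
    (g : G) : autocorr f g ≤ autocorr h g + 2 * √(∑ x, (f x - h x) ^ 2) := by
  have hsplit : autocorr f g = autocorr h g +
      (∑ x, (f x - h x) * f (x + g) + ∑ x, (f (x + g) - h (x + g)) * h x) := by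
    simp only [autocorr, ← sum_add_distrib]
    exact sum_congr rfl fun x _ => by ring
  have hfg : ∑ x, f (x + g) ^ 2 ≤ 1 := (sum_sq_comp_equiv f (Equiv.addRight g)).trans_le hf
  have hshift : ∑ x, (f (x + g) - h (x + g)) ^ 2 = ∑ x, (f x - h x) ^ 2 :=
    sum_sq_comp_equiv (f - h) (Equiv.addRight g)
  have hbound : ∀ u v : G → ℝ, ∑ x, v x ^ 2 ≤ 1 → ∑ x, u x * v x ≤ √(∑ x, u x ^ 2) := fun u v hv =>
    (Real.sum_mul_le_sqrt_mul_sqrt univ u v).trans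
      (mul_le_of_le_one_right (Real.sqrt_nonneg _) (Real.sqrt_le_one.mpr hv))
  have hleft := hbound (fun x => f x - h x) _ hfg
  have hright := hbound (fun x => f (x + g) - h (x + g)) h hh
  rw [hshift] at hright
  linarith

lemma selfConv_eq_add_selfConv_balance (f : G → ℝ) (b : G) :
    selfConv f b = (∑ x, f x) ^ 2 / Fintype.card G + selfConv (Fintype.balance f) b := by
  have hzero : ∑ x, Fintype.balance f (b - x) = 0 :=
    (Equiv.sum_comp (Equiv.subLeft b) _).trans (Fintype.sum_balance f)
  have hexpand : ∀ x, f x * f (b - x) = (∑ y, f y) ^ 2 / Fintype.card G ^ 2 +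
      (∑ y, f y) / Fintype.card G * (Fintype.balance f x + Fintype.balance f (b - x)) +
      Fintype.balance f x * Fintype.balance f (b - x) := fun x => by
    simp only [Fintype.balance_apply, Fintype.expect_eq_sum_div_card]
    ring
  simp only [selfConv, hexpand, sum_add_distrib, ← mul_sum, hzero, Fintype.sum_balance]
  simp only [sum_const, card_univ, nsmul_eq_mul]
  field_simp
  ring

lemma tripleConv_le_of_sum_balance_sq_le (hf : ∑ x, f x ^ 2 = 1)
    (hV : ∑ x, Fintype.balance f x ^ 2 ≤ 1 / 50) (c : G) :
    tripleConv f c ≤ 1 - (∑ x, Fintype.balance f x ^ 2) / 2 := by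
  set h := Fintype.balance f with hh
  set V := ∑ x, h x ^ 2
  have hV0 : 0 ≤ V := sum_nonneg fun _ _ => sq_nonneg _
  have hmean : (∑ x, f x) ^ 2 / Fintype.card G = 1 - V := by
    linarith [hf ▸ sum_balance_sq f]
  have hdev : ∑ x, |f x ^ 2 - 1 / Fintype.card G| ≤ 1 / 2 :=
    abs_le_of_sq_le_sq' (by linarith [sum_abs_sq_sub_inv_card_sq_le hf]) (by norm_num) |>.2
  have htotal : ∑ x, selfConv h (c - x) = 0 := by
    rw [← Equiv.sum_comp (Equiv.subLeft c)]
    simp [sum_selfConv, hh]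
  calc tripleConv f c
      = (1 - V) + ∑ x, (f x ^ 2 - 1 / Fintype.card G) * selfConv h (c - x) := by
        simp only [tripleConv, selfConv_eq_add_selfConv_balance f, hmean, mul_add, sub_mul,
          sum_add_distrib, sum_sub_distrib, ← sum_mul, ← mul_sum, hf, ← hh, htotal]
        ring
    _ ≤ (1 - V) + ∑ x, |f x ^ 2 - 1 / Fintype.card G| * V := by
        refine add_le_add_right (sum_le_sum fun x _ => (le_abs_self _).trans ?_) _
        rw [abs_mul]
        exact mul_le_mul_of_nonneg_left (abs_selfConv_le h _) (abs_nonneg _)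
    _ ≤ (1 - V) + 1 / 2 * V := by
        rw [← sum_mul]
        gcongr
    _ = 1 - V / 2 := by ring

lemma selfConv_le_of_ne (hf0 : ∀ x, 0 ≤ f x) (hf : ∑ x, f x ^ 2 = 1) {x₀ b : G}
    (hx₀ : 99 / 100 ≤ f x₀ ^ 2) (hb : b - x₀ ≠ x₀) : selfConv f b ≤ 7 / 8 := by
  have hmass := sq_add_sq_le_one hf hb.symm
  have hpeak : 9 / 10 ≤ f x₀ := by nlinarith [hf0 x₀]
  have hoff : f (b - x₀) ≤ 1 / 10 := by nlinarith [hf0 (b - x₀)]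
  have hterm : (f x₀ - f (b - x₀)) ^ 2 ≤ ∑ x, (f x - f (b - x)) ^ 2 :=
    single_le_sum (f := fun x => (f x - f (b - x)) ^ 2) (fun _ _ => sq_nonneg _) (mem_univ x₀)
  have hdefect := two_mul_sum_sq_sub_selfConv f b
  rw [hf] at hdefect
  nlinarith

lemma tripleConv_le_of_peak (hf0 : ∀ x, 0 ≤ f x) (hf : ∑ x, f x ^ 2 = 1) {x₀ : G}
    (hx₀ : 99 / 100 ≤ f x₀ ^ 2) (c : G) :
    tripleConv f c ≤ 1 - (1 - f (c - x₀ - x₀) ^ 2) / 8 := by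
  classical
  have hterm : ∀ x, selfConv f (c - x) ≤ 7 / 8 + if c - x₀ - x₀ = x then 1 / 8 else 0 := by
    intro x
    split_ifs with hx
    · linarith [selfConv_le_one hf (c - x)]
    · rw [add_zero]
      refine selfConv_le_of_ne hf0 hf hx₀ fun h => hx ?_
      rw [sub_right_comm] at h
      rw [sub_eq_iff_eq_add', ← sub_eq_iff_eq_add, h]
  calc tripleConv f c
      ≤ ∑ x, f x ^ 2 * (7 / 8 + if c - x₀ - x₀ = x then 1 / 8 else 0) :=
        sum_le_sum fun x _ => mul_le_mul_of_nonneg_left (hterm x) (sq_nonneg _)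
    _ = 1 - (1 - f (c - x₀ - x₀) ^ 2) / 8 := by
        simp only [mul_add, sum_add_distrib, ← sum_mul, hf, mul_ite, mul_zero, sum_ite_eq,
          mem_univ, if_true]
        ring

lemma sub_le_mul_sum_filter_selfConv (hf : ∑ x, f x ^ 2 = 1) (c : G) (ε : ℝ) :
    ε - (1 - tripleConv f c) ≤ ε * ∑ x with 1 - ε ≤ selfConv f (c - x), f x ^ 2 := by
  have hterm : ∀ x, selfConv f (c - x) ≤
      1 - ε + if 1 - ε ≤ selfConv f (c - x) then ε else 0 := fun x => by
    split_ifs <;> linarith [selfConv_le_one hf (c - x)]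
  have hsum : tripleConv f c ≤
      ∑ x, f x ^ 2 * (1 - ε + if 1 - ε ≤ selfConv f (c - x) then ε else 0) :=
    sum_le_sum fun x _ => mul_le_mul_of_nonneg_left (hterm x) (sq_nonneg _)
  simp only [mul_add, sum_add_distrib, ← sum_mul, hf, one_mul, mul_ite, mul_zero,
    ← sum_filter, mul_comm _ ε, ← mul_sum] at hsum
  linarith

lemma card_mul_le_card_of_le_autocorr (hf0 : ∀ x, 0 ≤ f x) (hf : ∑ x, f x ^ 2 = 1)
    {A D : Finset G} {θ η : ℝ} (hη : 0 ≤ η) (hA : 1 - η ^ 2 ≤ ∑ x ∈ A, f x ^ 2)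
    (hD : ∀ g ∈ D, θ ≤ autocorr f g) : #D * (θ - 2 * η) ≤ #A := by
  classical
  set h : G → ℝ := fun x => if x ∈ A then f x else 0 with hh
  have hh0 : ∀ x, 0 ≤ h x := fun x => by
    simp only [hh]
    split_ifs
    exacts [hf0 x, le_rfl]
  have hsplit := hf ▸ sum_add_sum_compl A (fun x => f x ^ 2)
  have hcompl : 0 ≤ ∑ x ∈ Aᶜ, f x ^ 2 := sum_nonneg fun _ _ => sq_nonneg _
  have hh1 : ∑ x, h x ^ 2 ≤ 1 := by
    have heq : ∑ x, h x ^ 2 = ∑ x ∈ A, f x ^ 2 := by simp [hh, ite_pow]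
    linarith
  have hclose : √(∑ x, (f x - h x) ^ 2) ≤ η := by
    have heq : ∑ x, (f x - h x) ^ 2 = ∑ x ∈ Aᶜ, f x ^ 2 := by
      rw [← sum_add_sum_compl A, sum_eq_zero fun x hx => by simp [hh, hx], zero_add]
      exact sum_congr rfl fun x hx => by simp [hh, mem_compl.mp hx]
    rw [Real.sqrt_le_left hη, heq]
    linarith
  calc (#D : ℝ) * (θ - 2 * η)
      = ∑ _g ∈ D, (θ - 2 * η) := by rw [sum_const, nsmul_eq_mul]
    _ ≤ ∑ g ∈ D, autocorr h g := sum_le_sum fun g hg => by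
        linarith [hD g hg, autocorr_le_autocorr_add hf.le hh1 g]
    _ ≤ ∑ g, autocorr h g := sum_le_univ_sum_of_nonneg fun g =>
        sum_nonneg fun x _ => mul_nonneg (hh0 x) (hh0 _)
    _ = (∑ x ∈ A, f x) ^ 2 := by rw [sum_autocorr]; simp [hh]
    _ ≤ #A * ∑ x ∈ A, f x ^ 2 := sq_sum_le_card_mul_sum_sq
    _ ≤ #A := mul_le_of_le_one_right (Nat.cast_nonneg _) (by linarith)

lemma sum_balance_sq_le_of_forall_le_autocorr (hf : ∑ x, f x ^ 2 = 1) {θ : ℝ}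
    (hθ : ∀ g, θ ≤ autocorr f g) : ∑ x, Fintype.balance f x ^ 2 ≤ 1 - θ := by
  have hsum : Fintype.card G * θ ≤ (∑ x, f x) ^ 2 := by
    rw [← sum_autocorr, ← nsmul_eq_mul]
    exact card_nsmul_le_sum univ _ _ fun g _ => hθ g
  rw [sum_balance_sq, hf]
  linarith [(le_div_iff₀' (Nat.cast_pos.mpr Fintype.card_pos)).mpr hsum]

end Correlations

open Pointwise in
lemma exists_le_sq_or_sum_balance_sq_le {p : ℕ} [Fact p.Prime] {f : ZMod p → ℝ}
    (hf0 : ∀ x, 0 ≤ f x) (hf : ∑ x, f x ^ 2 = 1) {c : ZMod p}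
    (hc : 1 - 1 / 20000 ≤ tripleConv f c) :
    (∃ x₀, 99 / 100 ≤ f x₀ ^ 2) ∨ ∑ x, Fintype.balance f x ^ 2 ≤ 1 / 50 := by
  set A : Finset (ZMod p) := {x | 1 - 1 / 200 ≤ selfConv f (c - x)} with hA
  have hmass : 99 / 100 ≤ ∑ x ∈ A, f x ^ 2 := by
    have := sub_le_mul_sum_filter_selfConv hf c (1 / 200)
    rw [← hA] at this
    linarith
  have hne : A.Nonempty := nonempty_iff_ne_empty.mpr fun h => by
    rw [h, sum_empty] at hmass
    norm_num at hmass
  have hcorr : ∀ g ∈ A - A, 98 / 100 ≤ autocorr f g := by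
    intro g hg
    obtain ⟨x, hx, y, hy, rfl⟩ := mem_sub.mp hg
    have hxy := two_mul_selfConv_add_sub_three_le_autocorr hf (c - x) (c - y)
    rw [sub_sub_sub_cancel_left] at hxy
    linarith [(mem_filter.mp hx).2, (mem_filter.mp hy).2]
  have hdiff : min p (#A + #A - 1) ≤ #(A - A) := by
    simpa only [card_neg, ← sub_eq_add_neg] using
      ZMod.cauchy_davenport (Fact.out : p.Prime) hne hne.neg
  rcases le_total p (#A + #A - 1) with hlarge | hsmall
  · right
    have huniv : A - A = univ := by
      rw [← card_eq_iff_eq_univ, ZMod.card]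
      have := card_le_univ (A - A)
      rw [ZMod.card] at this
      omega
    have := sum_balance_sq_le_of_forall_le_autocorr hf fun g => hcorr g (huniv ▸ mem_univ g)
    linarith
  · left
    have hcard : (#(A - A) : ℝ) * (98 / 100 - 2 * (1 / 10)) ≤ #A :=
      card_mul_le_card_of_le_autocorr hf0 hf (by norm_num) (by linarith) hcorr
    have htwice : (2 * #A : ℝ) ≤ #(A - A) + 1 := by
      norm_cast
      omega
    have hlt : #A < 2 := by
      have : (#A : ℝ) < 2 := by linarith
      exact_mod_cast this
    obtain ⟨x₀, hx₀⟩ := card_eq_one.mp (le_antisymm (Nat.le_of_lt_succ hlt) hne.card_pos)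
    exact ⟨x₀, by rwa [hx₀, sum_singleton] at hmass⟩

lemma sum_pi_fin_succ {α M : Type*} [Fintype α] [AddCommMonoid M] {n : ℕ}
    (F : (Fin (n + 1) → α) → M) : ∑ a, F a = ∑ b : Fin n → α, ∑ x, F (Fin.cons x b) := by
  rw [← Equiv.sum_comp (Fin.consEquiv fun _ => α), Fintype.sum_prod_type_right]
  rfl

lemma prod_prod_succAbove {M : Type*} [CommMonoid M] {n : ℕ} (v : Fin (n + 1) → M) :
    ∏ r : Fin (n + 1), ∏ s, v (r.succAbove s) = (∏ r, v r) ^ n := by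
  have herase : ∀ r : Fin (n + 1), ∏ s, v (r.succAbove s) = ∏ t ∈ univ.erase r, v t := fun r => by
    rw [← compl_singleton, ← Fin.image_succAbove_univ,
      prod_image Fin.succAbove_right_injective.injOn]
  simp only [herase]
  rw [prod_comm' (t' := univ) (s' := univ.erase) (by simp [eq_comm])]
  simp [prod_pow]

lemma prod_rpow_le_merged_mean {n : ℕ} {y : Fin (n + 2) → ℝ} (hy : ∀ r, 0 ≤ y r) :
    (∏ r, y r) ^ (1 / ((n : ℝ) + 2)) ≤
      1 / ((n : ℝ) + 2) * (2 * √(y 0 * y 1) + ∑ i : Fin n, y i.succ.succ) := by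
  set q := √(y 0 * y 1)
  have hq0 : 0 ≤ q := Real.sqrt_nonneg _
  have hqq : q * q = y 0 * y 1 := Real.mul_self_sqrt (mul_nonneg (hy 0) (hy 1))
  set z : Fin (n + 2) → ℝ := Fin.cons q (Fin.cons q fun i => y i.succ.succ) with hz
  have hz0 : ∀ i, 0 ≤ z i := Fin.cases hq0 (Fin.cases hq0 fun i => hy _)
  have hprod : ∏ i, z i = ∏ i, y i := by
    simp only [hz, Fin.prod_univ_succ, Fin.cons_zero, Fin.cons_succ, Fin.succ_zero_eq_one,
      ← mul_assoc, hqq]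
  have hsum : ∑ i, z i = 2 * q + ∑ i : Fin n, y i.succ.succ := by
    simp only [hz, Fin.sum_univ_succ, Fin.cons_zero, Fin.cons_succ]
    ring
  have hamgm := Real.geom_mean_le_arith_mean_weighted univ (fun _ => 1 / ((n : ℝ) + 2)) z
    (fun _ _ => by positivity) (by simp; field_simp) fun i _ => hz0 i
  rwa [Real.finsetProd_rpow _ _ fun i _ => hz0 i, hprod, ← mul_sum, hsum] at hamgm

lemma prod_rpow_le_merged_leave_one_out {k : ℕ} {y : Fin (k + 3) → ℝ} (hy : ∀ r, 0 ≤ y r) :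
    ∏ r, (y r ^ 2) ^ (((k : ℝ) + 2) / (k + 3)) ≤
      1 / ((k : ℝ) + 3) * (2 * (y 0 * y 1 * ∏ i : Fin (k + 1), y i.succ.succ ^ 2) +
        ∑ i : Fin (k + 1), ∏ s, y (i.succ.succ.succAbove s) ^ 2) := by
  have hmean := prod_rpow_le_merged_mean (n := k + 1) (y := fun r => ∏ s, y (r.succAbove s) ^ 2)
    fun r => prod_nonneg fun _ _ => sq_nonneg _
  have hmerge : √((∏ s, y (Fin.succAbove 0 s) ^ 2) * ∏ s, y (Fin.succAbove 1 s) ^ 2) =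
      y 0 * y 1 * ∏ i : Fin (k + 1), y i.succ.succ ^ 2 := by
    rw [← Real.sqrt_sq (mul_nonneg (mul_nonneg (hy 0) (hy 1)) (prod_nonneg fun _ _ => sq_nonneg _)),
      ← Fin.succ_zero_eq_one]
    simp only [Fin.prod_univ_succ, Fin.succAbove_zero, Fin.succ_succAbove_zero,
      Fin.succ_succAbove_succ]
    ring_nf
  have hexp : ((k : ℝ) + 2) / (k + 3) = (k + 2 : ℕ) * (1 / ((k + 1 : ℕ) + 2)) := by
    push_cast
    ring
  rw [prod_prod_succAbove fun r => y r ^ 2, hmerge] at hmean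
  rw [Real.finsetProd_rpow _ _ fun i _ => sq_nonneg _, hexp,
    Real.rpow_natCast_mul (prod_nonneg fun _ _ => sq_nonneg _)]
  refine hmean.trans_eq ?_
  push_cast
  ring

section ZeroSumTuples

variable {G : Type*} [AddCommGroup G] [Fintype G] [DecidableEq G] {f : G → ℝ}

lemma sum_zeroSum_eq_sum_insertNth {M : Type*} [AddCommMonoid M] {n : ℕ} (r : Fin (n + 1))
    (F : (Fin (n + 1) → G) → M) :
    ∑ a with ∑ i, a i = 0, F a =
      ∑ b : Fin n → G, F (r.insertNth (α := fun _ => G) (-∑ i, b i) b) := by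
  rw [sum_filter, ← Equiv.sum_comp (Fin.insertNthEquiv (fun _ => G) r),
    Fintype.sum_prod_type_right]
  simp [Fin.insertNthEquiv, Fin.sum_univ_succAbove _ r, ← eq_neg_iff_add_eq_zero]

lemma sum_zeroSum_prod_succAbove {w : G → ℝ} (hw : ∑ x, w x = 1) {n : ℕ} (r : Fin (n + 1)) :
    ∑ a : Fin (n + 1) → G with ∑ i, a i = 0, ∏ s, w (a (r.succAbove s)) = 1 := by
  rw [sum_zeroSum_eq_sum_insertNth r]
  simp only [Fin.insertNth_apply_succAbove, ← Fintype.sum_pow, hw, one_pow]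

/-- The correlation `∑ f(a₀) f(a₁) f(a₂)² ⋯ f(a_{k+2})²` over tuples with `a₀ + ⋯ + a_{k+2} = 0`:
the value at `0` of the convolution of two copies of `f` and `k + 1` copies of `f²`. -/
def zeroSumOverlap (f : G → ℝ) (k : ℕ) : ℝ :=
  ∑ a : Fin (k + 3) → G with ∑ i, a i = 0,
    f (a 0) * f (a 1) * ∏ i : Fin (k + 1), f (a i.succ.succ) ^ 2

lemma zeroSumOverlap_eq_sum_tripleConv (f : G → ℝ) (k : ℕ) :
    zeroSumOverlap f k =
      ∑ a : Fin k → G, (∏ i, f (a i) ^ 2) * tripleConv f (-∑ i, a i) := by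
  rw [zeroSumOverlap, sum_zeroSum_eq_sum_insertNth 0, sum_pi_fin_succ, sum_pi_fin_succ]
  simp only [tripleConv, selfConv, mul_sum]
  refine sum_congr rfl fun a _ => sum_congr rfl fun x _ => sum_congr rfl fun y _ => ?_
  have hhead : -(y + (x + ∑ i, a i)) = -∑ i, a i - x - y := by abel
  rw [← Fin.succ_zero_eq_one]
  simp only [Fin.insertNth_zero', Fin.cons_zero, Fin.cons_succ, Fin.sum_univ_succ,
    Fin.prod_univ_succ, hhead]
  ring

lemma sum_zeroSum_prod_rpow_le (hf0 : ∀ x, 0 ≤ f x) (hf : ∑ x, f x ^ 2 = 1) (k : ℕ) :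
    ∑ a : Fin (k + 3) → G with ∑ i, a i = 0, ∏ r, (f (a r) ^ 2) ^ (((k : ℝ) + 2) / (k + 3)) ≤
      1 - 2 / ((k : ℝ) + 3) * (1 - zeroSumOverlap f k) := calc
  _ ≤ ∑ a : Fin (k + 3) → G with ∑ i, a i = 0, 1 / ((k : ℝ) + 3) *
        (2 * (f (a 0) * f (a 1) * ∏ i : Fin (k + 1), f (a i.succ.succ) ^ 2) +
          ∑ i : Fin (k + 1), ∏ s, f (a (i.succ.succ.succAbove s)) ^ 2) :=
      sum_le_sum fun a _ => prod_rpow_le_merged_leave_one_out (y := fun r => f (a r)) fun _ => hf0 _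
  _ = 1 / ((k : ℝ) + 3) * (2 * zeroSumOverlap f k + (k + 1)) := by
      rw [← mul_sum, sum_add_distrib, ← mul_sum, sum_comm, zeroSumOverlap]
      simp only [sum_zeroSum_prod_succAbove hf, sum_const, card_univ, Fintype.card_fin,
        nsmul_eq_mul, mul_one, Nat.cast_add, Nat.cast_one]
  _ = 1 - 2 / ((k : ℝ) + 3) * (1 - zeroSumOverlap f k) := by
      field_simp
      ring

lemma zeroSumOverlap_le_of_forall_tripleConv_le (hf : ∑ x, f x ^ 2 = 1) {C : ℝ}
    (hC : ∀ c, tripleConv f c ≤ C) (k : ℕ) : zeroSumOverlap f k ≤ C := calc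
  zeroSumOverlap f k = ∑ a : Fin k → G, (∏ i, f (a i) ^ 2) * tripleConv f (-∑ i, a i) :=
    zeroSumOverlap_eq_sum_tripleConv f k
  _ ≤ ∑ a : Fin k → G, (∏ i, f (a i) ^ 2) * C := sum_le_sum fun _ _ =>
    mul_le_mul_of_nonneg_left (hC _) (prod_nonneg fun _ _ => sq_nonneg _)
  _ = C := by rw [← sum_mul, sum_prod_sq_eq_one hf, one_mul]

lemma zeroSumOverlap_le_sub_sq_pow_mul (hf : ∑ x, f x ^ 2 = 1) (k : ℕ) (x₀ : G) :
    zeroSumOverlap f k ≤ 1 - (f x₀ ^ 2) ^ k * (1 - tripleConv f (-(k • x₀))) := by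
  have hdefect : 1 - zeroSumOverlap f k =
      ∑ a : Fin k → G, (∏ i, f (a i) ^ 2) * (1 - tripleConv f (-∑ i, a i)) := by
    simp only [mul_sub, mul_one, sum_sub_distrib, sum_prod_sq_eq_one hf,
      zeroSumOverlap_eq_sum_tripleConv]
  have hconst := single_le_sum (f := fun a : Fin k → G =>
      (∏ i, f (a i) ^ 2) * (1 - tripleConv f (-∑ i, a i)))
    (fun a _ => mul_nonneg (prod_nonneg fun _ _ => sq_nonneg _)
      (sub_nonneg.mpr (tripleConv_le_one hf _))) (mem_univ fun _ => x₀)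
  simp only [← hdefect, prod_const, sum_const, card_univ, Fintype.card_fin] at hconst
  linarith

lemma zeroSumOverlap_le_of_peak_zero (hf0 : ∀ x, 0 ≤ f x) (hf : ∑ x, f x ^ 2 = 1)
    (hpeak : 99 / 100 ≤ f 0 ^ 2) (k : ℕ) : zeroSumOverlap f k ≤ 1 - (1 - f 0 ^ 2) / 8 := by
  refine zeroSumOverlap_le_of_forall_tripleConv_le hf (fun c => ?_) k
  refine (tripleConv_le_of_peak hf0 hf hpeak c).trans ?_
  rcases eq_or_ne (c - 0 - 0) 0 with hc | hc
  · rw [hc]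
  · linarith [sq_add_sq_le_one hf hc]

lemma zeroSumOverlap_le_of_peak (hf0 : ∀ x, 0 ≤ f x) (hf : ∑ x, f x ^ 2 = 1) {x₀ : G}
    (hpeak : 99 / 100 ≤ f x₀ ^ 2) {k : ℕ} (hx₀ : (k + 3) • x₀ ≠ 0) :
    zeroSumOverlap f k ≤ 1 - (99 / 100) ^ k * (99 / 800) := by
  have hne : -(k • x₀) - x₀ - x₀ ≠ x₀ := fun h => hx₀ <| by
    rw [add_nsmul, ← neg_eq_zero, ← sub_eq_zero.mpr h]
    abel
  have hconv := tripleConv_le_of_peak hf0 hf hpeak (-(k • x₀))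
  have hoff := sq_add_sq_le_one hf hne
  have hmul : (99 / 100 : ℝ) ^ k * (99 / 800) ≤
      (f x₀ ^ 2) ^ k * (1 - tripleConv f (-(k • x₀))) := by
    gcongr
    linarith
  linarith [zeroSumOverlap_le_sub_sq_pow_mul hf k x₀]

end ZeroSumTuples

lemma zeroSumOverlap_le_of_not_peak {p : ℕ} [Fact p.Prime] {f : ZMod p → ℝ}
    (hf0 : ∀ x, 0 ≤ f x) (hf : ∑ x, f x ^ 2 = 1) (hpeak : ∀ x, f x ^ 2 < 99 / 100) {ε : ℝ}
    (hε : ε ≤ 1 / 20000) (hV : 2 * ε ≤ ∑ x, Fintype.balance f x ^ 2) (k : ℕ) :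
    zeroSumOverlap f k ≤ 1 - ε := by
  refine zeroSumOverlap_le_of_forall_tripleConv_le hf (fun c => ?_) k
  by_contra! hc
  rcases exists_le_sq_or_sum_balance_sq_le hf0 hf (c := c) (by linarith) with ⟨x₀, hx₀⟩ | hsmall
  · exact (hpeak x₀).not_ge hx₀
  · linarith [tripleConv_le_of_sum_balance_sq_le hf hsmall c]

lemma zeroSumOverlap_le {p k : ℕ} [Fact p.Prime] (hpk : p.Coprime (k + 3)) {f : ZMod p → ℝ}
    (hf0 : ∀ x, 0 ≤ f x) (hf : ∑ x, f x ^ 2 = 1) {δ : ℝ} (hδ0 : 0 < δ) (hδ1 : δ < 1)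
    (hdev : ∃ j, δ / p < |f j ^ 2 - 1 / p|) (hzero : f 0 ^ 2 < 1 - δ / p) :
    zeroSumOverlap f k ≤ 1 - δ ^ 2 / 20000 * (99 / 100) ^ k / p := by
  have hp : (1 : ℝ) ≤ p := by exact_mod_cast (Fact.out : p.Prime).one_le
  have hpow : (99 / 100 : ℝ) ^ k ≤ 1 := pow_le_one₀ (by norm_num) (by norm_num)
  have hδp : δ ^ 2 / p ≤ δ / p := by gcongr; nlinarith
  have hδ : δ ^ 2 / p ≤ 1 := div_le_one_of_le₀ (by nlinarith) (by positivity)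
  have hδ_nonneg : 0 ≤ δ ^ 2 / p := by positivity
  rw [show δ ^ 2 / 20000 * (99 / 100) ^ k / p = δ ^ 2 / p * (99 / 100) ^ k / 20000 by ring]
  set K : ℝ := (99 / 100) ^ k
  have hK : 0 ≤ K := by positivity
  have hle : δ ^ 2 / p * K ≤ δ ^ 2 / p := mul_le_of_le_one_right hδ_nonneg hpow
  have hleK : δ ^ 2 / p * K ≤ K := mul_le_of_le_one_left hK hδ
  by_cases! hpeak : ∃ x₀, 99 / 100 ≤ f x₀ ^ 2
  · obtain ⟨x₀, hx₀⟩ := hpeak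
    rcases eq_or_ne x₀ 0 with rfl | hne
    · linarith [zeroSumOverlap_le_of_peak_zero hf0 hf hx₀ k]
    · have hsmul : (k + 3) • x₀ ≠ 0 := by
        rw [nsmul_eq_mul]
        refine mul_ne_zero ?_ hne
        rwa [Ne, ZMod.natCast_eq_zero_iff, ← (Fact.out : p.Prime).coprime_iff_not_dvd]
      linarith [zeroSumOverlap_le_of_peak hf0 hf hx₀ hsmul]
  · obtain ⟨j, hj⟩ := hdev
    have hV := le_sum_balance_sq_of_lt_abs_sub hf0 hf hδ0.le hδ1 (j := j) (by rwa [ZMod.card])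
    rw [ZMod.card, div_right_comm] at hV
    exact zeroSumOverlap_le_of_not_peak hf0 hf hpeak (by linarith) (by linarith) k

lemma sum_zeroSum_prod_rpow_lt_exp {p k : ℕ} [Fact p.Prime] (hpk : p.Coprime (k + 3))
    {n : ZMod p → ℝ} (hn : ∀ x, 0 ≤ n x) (hsum : ∑ x, n x = 1) {δ : ℝ} (hδ0 : 0 < δ) (hδ1 : δ < 1)
    (hdev : ∃ j, δ / p < |n j - 1 / p|) (hzero : n 0 < 1 - δ / p) :
    ∑ a : Fin (k + 3) → ZMod p with ∑ r, a r = 0, ∏ r, n (a r) ^ (((k : ℝ) + 2) / (k + 3)) <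
      Real.exp (-(δ ^ 2 / 20000 * (99 / 100) ^ k / (k + 3)) / p) := by
  have hp : (0 : ℝ) < p := by exact_mod_cast (Fact.out : p.Prime).pos
  obtain ⟨f, hf0, rfl⟩ : ∃ f : ZMod p → ℝ, (∀ x, 0 ≤ f x) ∧ n = fun x => f x ^ 2 :=
    ⟨fun x => √(n x), fun x => Real.sqrt_nonneg _, funext fun x => (Real.sq_sqrt (hn x)).symm⟩
  set c := δ ^ 2 / 20000 * (99 / 100) ^ k
  have hc0 : 0 < c / (k + 3) / p := by positivity
  calc ∑ a : Fin (k + 3) → ZMod p with ∑ r, a r = 0,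
        ∏ r, (f (a r) ^ 2) ^ (((k : ℝ) + 2) / (k + 3))
      ≤ 1 - 2 / ((k : ℝ) + 3) * (1 - zeroSumOverlap f k) := sum_zeroSum_prod_rpow_le hf0 hsum k
    _ ≤ 1 - 2 / ((k : ℝ) + 3) * (c / p) := by
        have := zeroSumOverlap_le hpk hf0 hsum hδ0 hδ1 hdev hzero
        gcongr
        linarith
    _ = 1 - 2 * (c / (k + 3) / p) := by ring
    _ < -(c / (k + 3) / p) + 1 := by linarith
    _ ≤ Real.exp (-(c / (k + 3)) / p) := by
        rw [neg_div]
        exact Real.add_one_le_exp _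

lemma exists_log_sum_exp_sub_le {ι : Type*} [Fintype ι] {d : ℕ}
    {Z : Finset (Fin d → ι)} (hZ : Z.Nonempty) {n : ι → ℝ} (hn : ∀ x, 0 ≤ n x)
    {β : ℝ} (hβ : 0 ≤ β) {C : ℝ} (hC : ∑ a ∈ Z, ∏ r, n (a r) ^ β < Real.exp C) :
    ∃ t : ι → ℝ, Real.log (∑ a ∈ Z, Real.exp (∑ r, t (a r))) - d * ∑ x, t x * n x ≤
      C - d * (β * ∑ x, n x * Real.log (n x)) := by
  have hcont : Continuous fun ε : ℝ => ∑ a ∈ Z, ∏ r, (n (a r) + ε) ^ β := by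
    fun_prop (disch := assumption)
  -- The tilt `β * log n` is unavailable where `n` vanishes; a small shift repairs this.
  obtain ⟨ε, hlt, hε⟩ : ∃ ε : ℝ, ∑ a ∈ Z, ∏ r, (n (a r) + ε) ^ β < Real.exp C ∧ 0 < ε := by
    have hlim := hcont.continuousWithinAt (s := Set.Ioi 0) (x := 0)
    refine ((hlim.eventually (gt_mem_nhds ?_)).and self_mem_nhdsWithin).exists
    simpa only [add_zero] using hC
  have hpos : ∀ x, 0 < n x + ε := fun x => add_pos_of_nonneg_of_pos (hn x) hε
  refine ⟨fun x => β * Real.log (n x + ε),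
    sub_le_sub ?_ (mul_le_mul_of_nonneg_left ?_ d.cast_nonneg)⟩
  · have hexp : ∀ a : Fin d → ι, Real.exp (∑ r, β * Real.log (n (a r) + ε)) =
        ∏ r, (n (a r) + ε) ^ β := fun a => by
      simp only [Real.exp_sum, Real.rpow_def_of_pos (hpos _), mul_comm β]
    simp only [← hexp] at hlt ⊢
    exact (Real.log_le_iff_le_exp (sum_pos (fun _ _ => Real.exp_pos _) hZ)).mpr hlt.le
  · rw [mul_sum]
    refine sum_le_sum fun x _ => ?_
    rcases (hn x).eq_or_lt with hx | hx
    · simp [← hx]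
    · rw [mul_comm (n x), ← mul_assoc]
      have hlog := Real.log_le_log hx (le_add_of_nonneg_right hε.le)
      exact mul_le_mul_of_nonneg_right (mul_le_mul_of_nonneg_left hlog hβ) hx.le

lemma sum_mul_Phi {d p : ℕ} [NeZero p] (a : Fin d → ZMod p) (t : ZMod p → ℝ) :
    ∑ k, t k * (Phi a k : ℝ) = ∑ r, t (a r) := by
  rw [← sum_fiberwise' univ a t]
  simp only [Phi, sum_const, nsmul_eq_mul, mul_comm]

/-- Rate function bound (directed case): for `d ≥ 3` there is `δ₀ > 0` such that for all
`δ ∈ (0, δ₀)` there is `c(δ) > 0` with: for every prime `p` with `gcd(p,d) = 1` and every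
probability vector `𝔫` on `{0,…,p-1}`, if `max_j |𝔫_j - 1/p| > δ/p` and `𝔫_0 < 1 - δ/p`,
then
`I(𝔫) = (d-1) ln p + (d-1) Σ_j 𝔫_j ln 𝔫_j + inf_t (ln(p^{-(d-1)} Σ_{a ∈ Z_{d,p}} e^{⟨t,Φ(a)⟩}) - d⟨t,𝔫⟩)`
(the infimum taken in the extended reals) is at most `-c(δ)/p`.
(Here `Real.log 0 = 0` yields the convention `0 ln 0 = 0`.) -/
theorem directed_rate_function_bound (d : ℕ) (hd : 3 ≤ d) :
    ∃ δ₀ : ℝ, 0 < δ₀ ∧ ∀ δ : ℝ, 0 < δ → δ < δ₀ → ∃ c : ℝ, 0 < c ∧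
      ∀ (p : ℕ) [Fact p.Prime], Nat.gcd p d = 1 →
        ∀ 𝔫 : ZMod p → ℝ, (∀ j, 0 ≤ 𝔫 j) → (∑ j, 𝔫 j) = 1 →
        (∃ j, δ / p < |𝔫 j - 1 / p|) → 𝔫 0 < 1 - δ / p →
        ((((d : ℝ) - 1) * Real.log p
              + ((d : ℝ) - 1) * ∑ j, 𝔫 j * Real.log (𝔫 j) : ℝ) : EReal)
          + ⨅ t : ZMod p → ℝ,
              ((Real.log ((p : ℝ) ^ (-((d : ℤ) - 1)) *
                  ∑ a ∈ Finset.univ.filter (fun a : Fin d → ZMod p => ∑ r, a r = 0),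
                    Real.exp (∑ k : ZMod p, t k * (Phi a k : ℝ)))
                - (d : ℝ) * ∑ k : ZMod p, t k * 𝔫 k : ℝ) : EReal)
          ≤ ((-c / p : ℝ) : EReal) := by
  obtain ⟨k, rfl⟩ : ∃ k, d = k + 3 := Nat.exists_eq_add_of_le' hd
  refine ⟨1, one_pos, fun δ hδ0 hδ1 => ?_⟩
  refine ⟨δ ^ 2 / 20000 * (99 / 100) ^ k / (k + 3), by positivity, ?_⟩
  intro p _ hpk 𝔫 hnonneg hsum hdev hzero
  have hp : (0 : ℝ) < p := by exact_mod_cast (Fact.out : p.Prime).pos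
  have hZ : ({a | ∑ r, a r = 0} : Finset (Fin (k + 3) → ZMod p)).Nonempty := ⟨0, by simp⟩
  obtain ⟨t, ht⟩ := exists_log_sum_exp_sub_le hZ hnonneg (by positivity)
    (sum_zeroSum_prod_rpow_lt_exp hpk hnonneg hsum hδ0 hδ1 hdev hzero)
  have hcancel : ((k + 3 : ℕ) : ℝ) * (((k : ℝ) + 2) / (k + 3) * ∑ j, 𝔫 j * Real.log (𝔫 j)) =
      (((k + 3 : ℕ) : ℝ) - 1) * ∑ j, 𝔫 j * Real.log (𝔫 j) := by
    push_cast
    field_simp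
    ring
  refine (add_le_add le_rfl (iInf_le _ t)).trans ?_
  simp only [sum_mul_Phi]
  rw [← EReal.coe_add, EReal.coe_le_coe_iff, Real.log_mul (zpow_pos hp _).ne'
    (sum_pos (fun _ _ => Real.exp_pos _) hZ).ne', Real.log_zpow]
  push_cast at ht hcancel ⊢
  linarith
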